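/- Let R ⊆ S be an integral inclusion of normal local domains with fraction fields K ⊆ L, with L/K finite separable. Let M be a Galois closure of L/K and T the integral closure of S in M. Suppose T is local, and that there is a unit u ∈ T such that the map T → S, x ↦ Tr_{M/L}(u·x), is a splitting of the inclusion S ⊆ T (an S-linear map restricting to the identity on S). Let J ⊆ S be an ideal such that J = J' ∩ S for some characteristic ideal J' of T. Then Tr_{L/K}(J) ⊆ J ∩ R. -/

import Mathlib

/-- Let `R ⊆ S` be an integral inclusion of normal local domains with fraction fields `K ⊆ L`,
`L/K` finite separable, `M` a Galois closure of `L/K` and `T` the integral closure of `S` in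
`M`. Suppose `T` is local and there is a unit `u ∈ T` such that `x ↦ Tr_{M/L}(u·x)` is a
splitting of `S ⊆ T`. If `J ⊆ S` is an ideal with `J = J' ∩ S` for a characteristic ideal `J'`
of `T`, then `Tr_{L/K}(J) ⊆ J ∩ R`. -/
theorem trace_mem_of_contraction_of_characteristic
    {R S K L M : Type*} [CommRing R] [CommRing S] [Field K] [Field L] [Field M]
    [IsDomain R] [IsDomain S] [IsLocalRing R] [IsLocalRing S]
    [IsIntegrallyClosed R] [IsIntegrallyClosed S]
    [Algebra R K] [IsFractionRing R K] [Algebra S L] [IsFractionRing S L]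
    [Algebra R S] [Algebra K L] [Algebra R L] [IsScalarTower R K L] [IsScalarTower R S L]
    [FiniteDimensional K L] [Algebra.IsSeparable K L]
    [Algebra.IsIntegral R S] (hinj : Function.Injective (algebraMap R S))
    -- `M` is a Galois closure of `L/K`:
    [Algebra L M] [Algebra K M] [IsScalarTower K L M] [Algebra S M] [IsScalarTower S L M]
    [FiniteDimensional K M] [FiniteDimensional L M] [IsGalois K M]
    (hmin : ∀ M' : IntermediateField K M, IsGalois K M' →
      (∀ l : L, algebraMap L M l ∈ M') → M' = ⊤)
    -- `T` is the integral closure of `S` in `M`; it is local: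
    (hTloc : IsLocalRing (integralClosure S M))
    -- a unit `u ∈ T` such that `Tr_{M/L}(u·-)` is a splitting of `S ⊆ T`:
    (u : integralClosure S M) (hu : IsUnit u)
    (hTr : ∀ t : integralClosure S M, ∃ s : S,
      algebraMap S L s = Algebra.trace L M ((u : M) * (t : M)))
    (hTrId : ∀ s : S,
      Algebra.trace L M ((u : M) * algebraMap S M s) = algebraMap S L s)
    -- the ideals:
    (J : Ideal S) (J' : Ideal (integralClosure S M))
    (hJ'char : ∀ φ : (integralClosure S M) ≃+* (integralClosure S M), ∀ x ∈ J', φ x ∈ J')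
    (hJ : J = J'.comap (algebraMap S (integralClosure S M))) :
    ∀ j ∈ J, ∃ r : R,
      algebraMap R K r = Algebra.trace K L (algebraMap S L j) ∧ algebraMap R S r ∈ J := by
  classical
  letI : Algebra R M := ((algebraMap S M).comp (algebraMap R S)).toAlgebra
  haveI : IsScalarTower R S M := IsScalarTower.of_algebraMap_eq (fun _ => rfl)
  haveI : IsScalarTower R L M := IsScalarTower.of_algebraMap_eq (fun r => by
    rw [IsScalarTower.algebraMap_apply R S M, IsScalarTower.algebraMap_apply S L M,
      ← IsScalarTower.algebraMap_apply R S L])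
  haveI : IsScalarTower R K M := IsScalarTower.of_algebraMap_eq (fun r => by
    rw [IsScalarTower.algebraMap_apply R L M, IsScalarTower.algebraMap_apply R K L,
      ← IsScalarTower.algebraMap_apply K L M])
  have hmem : ∀ (σ : M ≃ₐ[K] M) (x : M), x ∈ integralClosure S M →
      σ x ∈ integralClosure S M := by
    intro σ x hx
    have hx' : IsIntegral R x := isIntegral_trans (R := R) (A := S) x hx
    have h2 : IsIntegral R (σ x) := hx'.map (σ.restrictScalars R)
    exact h2.tower_top
  let φ : (M ≃ₐ[K] M) → ((integralClosure S M) ≃+* (integralClosure S M)) := fun σ =>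
    { toFun := fun x => ⟨σ x, hmem σ x x.2⟩
      invFun := fun x => ⟨σ.symm x, hmem σ.symm x x.2⟩
      left_inv := fun x => Subtype.ext (by simp)
      right_inv := fun x => Subtype.ext (by simp)
      map_mul' := fun x y => Subtype.ext (by simp)
      map_add' := fun x y => Subtype.ext (by simp) }
  intro j hj
  have hjint : IsIntegral R (algebraMap S L j) :=
    (Algebra.IsIntegral.isIntegral (R := R) j).map (IsScalarTower.toAlgHom R S L)
  obtain ⟨r, hr⟩ := IsIntegrallyClosed.isIntegral_iff.mp
    (Algebra.isIntegral_trace (L := K) hjint)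
  refine ⟨r, hr, ?_⟩
  have hj' : algebraMap S (integralClosure S M) j ∈ J' := by
    rw [hJ] at hj
    exact hj
  rw [hJ, Ideal.mem_comap]
  have key : algebraMap S (integralClosure S M) (algebraMap R S r)
      = ∑ σ : M ≃ₐ[K] M, φ σ (u * algebraMap S (integralClosure S M) j) := by
    apply Subtype.ext
    have h1 : ((algebraMap S (integralClosure S M) (algebraMap R S r) :
        integralClosure S M) : M) = algebraMap K M (algebraMap R K r) := by
      rw [← IsScalarTower.algebraMap_apply R K M]
      rfl
    rw [h1, hr, ← hTrId j, Algebra.trace_trace, trace_eq_sum_automorphisms]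
    rw [AddSubmonoidClass.coe_finsetSum]
    rfl
  rw [key]
  exact J'.sum_mem fun σ _ => hJ'char _ _ (J'.mul_mem_left _ hj')
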